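/- Let n ≥ 3 and let 0 < θ < φ < π/2. Set ω₁ := ω(θ,φ), ψ := φ·(1 − ω₁/π), ω₂ := ω(θ,φ,ψ), and assume φ − ψ ≤ θ ≤ φ + ψ. Then 2·A(n,θ,φ) ≤ A(n−1, min(ω₁,ω₂)) + A(n, ω₁), where A(n−1,·) refers to codes on the unit sphere S^{n−2} ⊂ ℝ^{n−1}. -/

import Mathlib

noncomputable section

/-- The "North pole" `(0, …, 0, 1)` of the unit sphere in `ℝ^n`. -/
def north (n : ℕ) : EuclideanSpace ℝ (Fin n) :=
  if h : 0 < n then EuclideanSpace.single ⟨n - 1, Nat.sub_lt h Nat.one_pos⟩ 1 else 0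

/-- Angular distance between two points: `arccos ⟨x, y⟩`. -/
def aDist {n : ℕ} (x y : EuclideanSpace ℝ (Fin n)) : ℝ := Real.arccos (inner ℝ x y : ℝ)

/-- A finite set of unit vectors with pairwise angular distance at least `θ`. -/
def IsCode {n : ℕ} (θ : ℝ) (C : Finset (EuclideanSpace ℝ (Fin n))) : Prop :=
  (∀ x ∈ C, ‖x‖ = 1) ∧ ∀ x ∈ C, ∀ y ∈ C, x ≠ y → θ ≤ aDist x y

/-- `A(n, θ)`: maximal size of a `θ`-code on the unit sphere `S^{n-1} ⊂ ℝ^n`. -/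
def sphereMax (n : ℕ) (θ : ℝ) : ℕ :=
  sSup {M | ∃ C : Finset (EuclideanSpace ℝ (Fin n)), IsCode θ C ∧ C.card = M}

/-- `A(n, θ, φ)`: maximal size of a `θ`-code in the cap of angular radius `φ` about the
North pole. -/
def capMax (n : ℕ) (θ φ : ℝ) : ℕ :=
  sSup {M | ∃ C : Finset (EuclideanSpace ℝ (Fin n)), IsCode θ C ∧
    (∀ x ∈ C, aDist x (north n) ≤ φ) ∧ C.card = M}

/-- `A(n, θ, [ψ, φ])`: maximal size of a `θ`-code in the strip `Z(n, [ψ, φ])`. -/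
def stripMax (n : ℕ) (θ ψ φ : ℝ) : ℕ :=
  sSup {M | ∃ C : Finset (EuclideanSpace ℝ (Fin n)), IsCode θ C ∧
    (∀ x ∈ C, ψ ≤ aDist x (north n) ∧ aDist x (north n) ≤ φ) ∧ C.card = M}

/-- `m(n, d)`: maximal number of points in the closed unit ball of `ℝ^n` with pairwise
Euclidean distances at least `d`. -/
def ballMax (n : ℕ) (d : ℝ) : ℕ :=
  sSup {M | ∃ C : Finset (EuclideanSpace ℝ (Fin n)), (∀ x ∈ C, ‖x‖ ≤ 1) ∧
    (∀ x ∈ C, ∀ y ∈ C, x ≠ y → d ≤ dist x y) ∧ C.card = M}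

/-- `ω(θ, α, β) = arccos((cos θ - cos α cos β) / (sin α sin β))`. -/
def omega2 (θ α β : ℝ) : ℝ :=
  Real.arccos ((Real.cos θ - Real.cos α * Real.cos β) / (Real.sin α * Real.sin β))

/-- `ω(θ, α) := ω(θ, α, α)`. -/
def omega1 (θ α : ℝ) : ℝ := omega2 θ α α

end


open Real in
lemma aux_F (k x : ℝ) (hk : 1 < k) (hx0 : 0 ≤ x) (hx : k * x ≤ π / 2) :
    0 ≤ sin (k * x) * cos x - k * cos (k * x) * sin x := by
  have hd : ∀ y : ℝ, HasDerivAt (fun y => sin (k * y) * cos y - k * cos (k * y) * sin y)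
      ((k ^ 2 - 1) * (sin (k * y) * sin y)) y := by
    intro y
    have hl : HasDerivAt (fun y : ℝ => k * y) k y := by
      simpa using (hasDerivAt_id y).const_mul k
    have h1 := hl.sin.mul (hasDerivAt_cos y)
    have h2 := (hl.cos.const_mul k).mul (hasDerivAt_sin y)
    refine (h1.sub h2).congr_deriv ?_
    ring
  have hm : MonotoneOn (fun y => sin (k * y) * cos y - k * cos (k * y) * sin y)
      (Set.Icc 0 x) := by
    apply monotoneOn_of_hasDerivWithinAt_nonneg (convex_Icc 0 x)
      (fun y _ => (hd y).continuousAt.continuousWithinAt)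
      (fun y _ => (hd y).hasDerivWithinAt)
    intro y hy
    rw [interior_Icc] at hy
    have h1 : k * y ≤ π / 2 := by nlinarith [hy.1, hy.2]
    have h2 : y ≤ k * y := by nlinarith [hy.1, hy.2]
    have h0 : 0 ≤ y := hy.1.le
    have := pi_pos
    have a1 : 0 ≤ sin (k * y) := sin_nonneg_of_nonneg_of_le_pi (by linarith) (by linarith)
    have a2 : 0 ≤ sin y := sin_nonneg_of_nonneg_of_le_pi (by linarith) (by linarith)
    have : 0 ≤ k ^ 2 - 1 := by nlinarith
    positivity
  have := hm (Set.left_mem_Icc.2 hx0) (Set.right_mem_Icc.2 hx0) hx0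
  simpa using this

open Real in
lemma aux_stretch (k φ x : ℝ) (hφ0 : 0 < φ) (hφ : φ < π / 2) (hk : k * φ = π / 2)
    (hx0 : 0 ≤ x) (hx : x ≤ φ) : sin x ≤ sin φ * sin (k * x) := by
  have hk1 : 1 < k := by nlinarith
  rcases hx0.eq_or_lt with rfl | hx0
  · simp
  have hpi := pi_pos
  have hs : ∀ y ∈ Set.Icc x φ, 0 < sin y := fun y hy =>
    sin_pos_of_pos_of_lt_pi (by linarith [hy.1]) (by linarith [hy.2])
  have hd : ∀ y ∈ Set.Icc x φ, HasDerivAt (fun y => sin (k * y) / sin y)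
      ((cos (k * y) * k * sin y - sin (k * y) * cos y) / sin y ^ 2) y := by
    intro y hy
    have hl : HasDerivAt (fun y : ℝ => k * y) k y := by
      simpa using (hasDerivAt_id y).const_mul k
    exact hl.sin.div (hasDerivAt_sin y) (hs y hy).ne'
  have hm : AntitoneOn (fun y => sin (k * y) / sin y) (Set.Icc x φ) := by
    apply antitoneOn_of_hasDerivWithinAt_nonpos (convex_Icc x φ)
      (fun y hy => (hd y hy).continuousAt.continuousWithinAt)
      (fun y hy => (hd y (interior_subset hy)).hasDerivWithinAt)
    intro y hy
    have hy := interior_subset hy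
    have := aux_F k y hk1 (by linarith [hy.1]) (by nlinarith [hy.1, hy.2])
    apply div_nonpos_of_nonpos_of_nonneg
    · linarith
    · positivity
  have h := hm (Set.left_mem_Icc.2 hx) (Set.right_mem_Icc.2 hx) hx
  simp only [hk, sin_pi_div_two] at h
  rw [div_le_div_iff₀ (hs φ ⟨hx, le_rfl⟩) (hs x ⟨le_rfl, hx⟩)] at h
  linarith

open Real in
lemma aux_interp (a b c p q r : ℝ) (hc : 0 ≤ c) (hpq : p < q) (hq : q - p < π)
    (hpr : p ≤ r) (hrq : r ≤ q) (h1 : c ≤ a * cos p + b * sin p)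
    (h2 : c ≤ a * cos q + b * sin q) : c ≤ a * cos r + b * sin r := by
  have hS : 0 < sin (q - p) := sin_pos_of_pos_of_lt_pi (by linarith) hq
  have hA : 0 ≤ sin (q - r) := sin_nonneg_of_nonneg_of_le_pi (by linarith) (by linarith)
  have hB : 0 ≤ sin (r - p) := sin_nonneg_of_nonneg_of_le_pi (by linarith) (by linarith)
  have hsum : sin (q - p) ≤ sin (q - r) + sin (r - p) := by
    have : q - p = (q - r) + (r - p) := by ring
    rw [this, sin_add]
    nlinarith [cos_le_one (q - r), cos_le_one (r - p)]
  have key : sin (q - p) * (a * cos r + b * sin r)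
      = sin (q - r) * (a * cos p + b * sin p) + sin (r - p) * (a * cos q + b * sin q) := by
    have e := sin_sq_add_cos_sq r
    simp only [sin_sub]
    ring
  have : sin (q - p) * c ≤ sin (q - p) * (a * cos r + b * sin r) := by
    rw [key]
    nlinarith [mul_le_mul_of_nonneg_left h1 hA, mul_le_mul_of_nonneg_left h2 hB,
      mul_le_mul_of_nonneg_right hsum hc]
  exact le_of_mul_le_mul_left this hS

open Real in
lemma code_bdd (n : ℕ) (δ : ℝ) (hδ : 0 < δ) (hδπ : δ ≤ π) :
    BddAbove {M | ∃ C : Finset (EuclideanSpace ℝ (Fin n)), IsCode δ C ∧ C.card = M} := by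
  have hcos : cos δ < 1 := by
    have := cos_lt_cos_of_nonneg_of_le_pi le_rfl hδπ hδ
    simpa using this
  set ε := √(2 - 2 * cos δ) with hε
  have hεpos : 0 < ε := sqrt_pos.2 (by linarith)
  obtain ⟨t, -, htf, ht⟩ := finite_cover_balls_of_compact
    (isCompact_sphere (0 : EuclideanSpace ℝ (Fin n)) 1) (half_pos hεpos)
  refine ⟨htf.toFinset.card, ?_⟩
  rintro M ⟨C, ⟨hC1, hC2⟩, rfl⟩
  have hch : ∀ x : EuclideanSpace ℝ (Fin n), ∃ y, x ∈ C → y ∈ t ∧ dist x y < ε / 2 := by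
    intro x
    by_cases hx : x ∈ C
    · have := ht (show x ∈ Metric.sphere 0 1 by simpa using hC1 x hx)
      simp only [Set.mem_iUnion, Metric.mem_ball] at this
      obtain ⟨y, hy, h⟩ := this
      exact ⟨y, fun _ => ⟨hy, h⟩⟩
    · exact ⟨x, fun h => absurd h hx⟩
  choose g hg using hch
  apply Finset.card_le_card_of_injOn g
  · intro x hx
    simpa using (hg x hx).1
  · intro x hx y hy hxy
    by_contra hne
    have h := hC2 x hx y hy hne
    have hx1 := hC1 x hx
    have hy1 := hC1 y hy
    have hi : |inner ℝ x y| ≤ 1 := by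
      have := abs_real_inner_le_norm x y
      rwa [hx1, hy1, mul_one] at this
    have hle : inner ℝ x y ≤ cos δ := by
      have := cos_le_cos_of_nonneg_of_le_pi hδ.le (arccos_le_pi _) h
      rwa [cos_arccos (abs_le.1 hi).1 (abs_le.1 hi).2] at this
    have hd : dist x y < ε := by
      have h1 := (hg x hx).2
      have h2 := (hg y hy).2
      rw [← hxy] at h2
      have := dist_triangle_right x y (g x)
      linarith
    have hsq : dist x y ^ 2 = 2 - 2 * inner ℝ x y := by
      rw [dist_eq_norm, norm_sub_sq_real, hx1, hy1]; ring
    have : ε ^ 2 = 2 - 2 * cos δ := sq_sqrt (by linarith)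
    nlinarith [dist_nonneg (x := x) (y := y)]

open Real in
lemma card_le_sphereMax {ι : Type*} (n : ℕ) (c : ℝ) (hc : c < 1) (s : Finset ι)
    (f : ι → EuclideanSpace ℝ (Fin n)) (h1 : ∀ i ∈ s, ‖f i‖ = 1)
    (h2 : ∀ i ∈ s, ∀ j ∈ s, i ≠ j → inner ℝ (f i) (f j) ≤ c) :
    s.card ≤ sphereMax n (arccos c) := by
  classical
  apply le_csSup (code_bdd n _ (arccos_pos.2 hc) (arccos_le_pi _))
  refine ⟨s.image f, ⟨?_, ?_⟩, ?_⟩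
  · intro x hx
    obtain ⟨i, hi, rfl⟩ := Finset.mem_image.1 hx
    exact h1 i hi
  · intro x hx y hy hxy
    obtain ⟨i, hi, rfl⟩ := Finset.mem_image.1 hx
    obtain ⟨j, hj, rfl⟩ := Finset.mem_image.1 hy
    exact antitone_arccos (h2 i hi j hj (fun h => hxy (by rw [h])))
  · apply Finset.card_image_of_injOn
    intro i hi j hj hij
    by_contra hne
    have := h2 i hi j hj hne
    rw [hij, real_inner_self_eq_norm_sq, h1 j hj] at this
    linarith

/-- Polar coordinates on the sphere. -/
noncomputable def polarPt {m : ℕ} (r : ℝ) (u : EuclideanSpace ℝ (Fin m)) :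
    EuclideanSpace ℝ (Fin (m + 1)) :=
  WithLp.toLp 2 (Fin.snoc (α := fun _ => ℝ) (fun i => Real.sin r * u i) (Real.cos r))

lemma inner_polarPt {m : ℕ} (r s : ℝ) (u v : EuclideanSpace ℝ (Fin m)) :
    inner ℝ (polarPt r u) (polarPt s v)
      = Real.sin r * Real.sin s * inner ℝ u v + Real.cos r * Real.cos s := by
  simp only [PiLp.inner_apply, polarPt, Fin.sum_univ_castSucc, Fin.snoc_castSucc, Fin.snoc_last,
    Finset.mul_sum]
  congr 1
  · apply Finset.sum_congr rfl
    intro i _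
    simp
    ring
  · simp [mul_comm]

lemma norm_polarPt {m : ℕ} (r : ℝ) (u : EuclideanSpace ℝ (Fin m)) (hu : ‖u‖ = 1) :
    ‖polarPt r u‖ = 1 := by
  have h : ‖polarPt r u‖ ^ 2 = 1 := by
    rw [← real_inner_self_eq_norm_sq, inner_polarPt, real_inner_self_eq_norm_sq, hu]
    nlinarith [Real.sin_sq_add_cos_sq r]
  nlinarith [norm_nonneg (polarPt r u)]

lemma aDist_north {m : ℕ} (x : EuclideanSpace ℝ (Fin (m + 1))) :
    aDist x (north (m + 1)) = Real.arccos (x (Fin.last m)) := by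
  have : north (m + 1) = EuclideanSpace.single (Fin.last m) 1 := by
    simp [north, Fin.last]
  rw [aDist, this, EuclideanSpace.inner_single_right]
  simp

lemma exists_polar {m : ℕ} (hm : 0 < m) (x : EuclideanSpace ℝ (Fin (m + 1))) (hx : ‖x‖ = 1) :
    ∃ u : EuclideanSpace ℝ (Fin m), ‖u‖ = 1 ∧ x = polarPt (aDist x (north (m + 1))) u := by
  rw [aDist_north]
  set z := x (Fin.last m) with hz
  let w : EuclideanSpace ℝ (Fin m) := WithLp.toLp 2 (fun i => x i.castSucc)
  have hw : ‖w‖ ^ 2 + z ^ 2 = 1 := by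
    have h : ‖x‖ ^ 2 = 1 := by rw [hx]; norm_num
    rw [EuclideanSpace.real_norm_sq_eq, Fin.sum_univ_castSucc] at h
    rw [EuclideanSpace.real_norm_sq_eq]
    exact h
  have hz1 : -1 ≤ z ∧ z ≤ 1 := by
    constructor <;> nlinarith [sq_nonneg ‖w‖]
  have hsin : Real.sin (Real.arccos z) = ‖w‖ := by
    rw [Real.sin_arccos, show 1 - z ^ 2 = ‖w‖ ^ 2 by linarith, Real.sqrt_sq (norm_nonneg _)]
  have hcos : Real.cos (Real.arccos z) = z := Real.cos_arccos hz1.1 hz1.2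
  have hu : ∃ u : EuclideanSpace ℝ (Fin m), ‖u‖ = 1 ∧ w = ‖w‖ • u := by
    by_cases h0 : w = 0
    · refine ⟨EuclideanSpace.single ⟨0, hm⟩ 1, by simp, by simp [h0]⟩
    · have : ‖w‖ ≠ 0 := norm_ne_zero_iff.2 h0
      refine ⟨‖w‖⁻¹ • w, ?_, ?_⟩
      · rw [norm_smul, norm_inv, norm_norm, inv_mul_cancel₀ this]
      · rw [smul_smul, mul_inv_cancel₀ this, one_smul]
  obtain ⟨u, hu1, hu2⟩ := hu
  refine ⟨u, hu1, ?_⟩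
  ext i
  refine Fin.lastCases ?_ (fun i => ?_) i
  · simp only [polarPt, Fin.snoc_last, hcos]
    exact hz.symm
  · have : w i = ‖w‖ * u i := by
      conv_lhs => rw [hu2]
      simp
    simp only [polarPt, Fin.snoc_castSucc, hsin]
    exact this

set_option maxHeartbeats 4000000 in
open Real in
theorem stmt19 (n : ℕ) (hn : 3 ≤ n) (θ φ : ℝ) (hθ : 0 < θ) (hθφ : θ < φ)
    (hφ : φ < Real.pi / 2) (ψ : ℝ) (hψ : ψ = φ * (1 - omega1 θ φ / Real.pi))
    (hlo : φ - ψ ≤ θ) (hhi : θ ≤ φ + ψ) :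
    2 * capMax n θ φ ≤
      sphereMax (n - 1) (min (omega1 θ φ) (omega2 θ φ ψ)) + sphereMax n (omega1 θ φ) := by
  classical
  obtain ⟨m, rfl⟩ : ∃ m, n = m + 1 := ⟨n - 1, by omega⟩
  have hm : 0 < m := by omega
  simp only [Nat.add_sub_cancel]
  have hpi := pi_pos
  have hφ0 : 0 < φ := hθ.trans hθφ
  have hsφ : 0 < sin φ := sin_pos_of_pos_of_lt_pi hφ0 (by linarith)
  have hcφ : 0 < cos φ := cos_pos_of_mem_Ioo ⟨by linarith, hφ⟩
  have hcθφ : cos φ < cos θ := cos_lt_cos_of_nonneg_of_le_pi hθ.le (by linarith) hθφ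
  have hcθ1 : cos θ < 1 := by
    have := cos_lt_cos_of_nonneg_of_le_pi le_rfl (by linarith : θ ≤ π) hθ
    simpa using this
  have hcθ0 : 0 < cos θ := by linarith
  have hcφ1 : cos φ < 1 := by linarith
  obtain ⟨c1, hc1⟩ : ∃ c, c = (cos θ - cos φ * cos φ) / (sin φ * sin φ) := ⟨_, rfl⟩
  obtain ⟨c2, hc2⟩ : ∃ c, c = (cos θ - cos φ * cos ψ) / (sin φ * sin ψ) := ⟨_, rfl⟩
  have hω1 : omega1 θ φ = arccos c1 := by rw [hc1]; rfl
  have hω2 : omega2 θ φ ψ = arccos c2 := by rw [hc2]; rfl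
  have hc1m : c1 * (sin φ * sin φ) = cos θ - cos φ * cos φ := by
    rw [hc1]; field_simp
  have hsc := sin_sq_add_cos_sq φ
  have hc1' : (1 - c1) * (sin φ * sin φ) = 1 - cos θ := by linarith
  have hss : 0 < sin φ * sin φ := by positivity
  have hc10 : 0 ≤ c1 := by
    rw [hc1]; apply div_nonneg _ hss.le; nlinarith
  have hc11 : c1 < 1 := by nlinarith
  rw [hω1] at hψ ⊢
  rw [hω2]
  set ω := arccos c1 with hω
  have hω0 : 0 < ω := arccos_pos.2 hc11
  have hωpi : ω ≤ π / 2 := arccos_le_pi_div_two.2 hc10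
  have hcω : cos ω = c1 := cos_arccos (by linarith) hc11.le
  obtain ⟨k, hk⟩ : ∃ k, k = π / (2 * φ) := ⟨_, rfl⟩
  have hkφ : k * φ = π / 2 := by rw [hk]; field_simp
  have hk1 : 1 < k := by nlinarith
  have hkψ : 2 * (k * ψ) = π - ω := by
    rw [hψ, hk]; field_simp
  have hψφ : ψ < φ := by
    have : k * ψ < k * φ := by linarith
    exact lt_of_mul_lt_mul_left this (by linarith)
  have hψ0 : 0 < ψ := by
    have : 0 < k * ψ := by linarith
    exact pos_of_mul_pos_right this (by linarith) |> fun h => h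
  have hstr : ∀ x, 0 ≤ x → x ≤ φ → sin x ≤ sin φ * sin (k * x) :=
    fun x h0 h1 => aux_stretch k φ x hφ0 hφ hkφ h0 h1
  have hsψ : 0 < sin ψ := sin_pos_of_pos_of_lt_pi hψ0 (by linarith)
  -- strictness
  have hlo' : φ - ψ < θ := by
    have hkθ : k * θ < π / 2 := by rw [← hkφ]; exact mul_lt_mul_of_pos_left hθφ (by linarith)
    have hkθ0 : 0 < k * θ := by positivity
    have h1 := hstr (θ / 2) (by linarith) (by linarith)
    have h2 : sin (k * (θ / 2)) < sin (k * θ) :=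
      sin_lt_sin_of_lt_of_le_pi_div_two (by linarith) hkθ.le (by linarith)
    have h3 : sin (θ / 2) < sin φ * sin (k * θ) :=
      h1.trans_lt (mul_lt_mul_of_pos_left h2 hsφ)
    have h4 : 0 < sin (θ / 2) := sin_pos_of_pos_of_lt_pi (by linarith) (by linarith)
    have h5 : cos (2 * (k * θ)) < c1 := by
      have e1 : cos (2 * (k * θ)) = 1 - 2 * sin (k * θ) ^ 2 := by
        rw [cos_two_mul]; linarith [sin_sq_add_cos_sq (k * θ)]
      have e2 : cos θ = 1 - 2 * sin (θ / 2) ^ 2 := by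
        rw [show cos θ = cos (2 * (θ / 2)) by ring_nf, cos_two_mul]
        linarith [sin_sq_add_cos_sq (θ / 2)]
      rw [e1]
      have e3 : sin (θ / 2) ^ 2 < (sin φ * sin (k * θ)) ^ 2 := by gcongr
      by_contra hcon
      push Not at hcon
      have := mul_le_mul_of_nonneg_right hcon hss.le
      linarith
    have h6 : ω < 2 * (k * θ) := by
      by_contra hcon
      push Not at hcon
      have := cos_le_cos_of_nonneg_of_le_pi (by linarith) (by linarith) hcon
      linarith
    have : k * (φ - ψ) < k * θ := by linarith
    exact lt_of_mul_lt_mul_left this (by linarith)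
  have hc2m : c2 * (sin φ * sin ψ) = cos θ - cos φ * cos ψ := by
    rw [hc2]; field_simp
  have hc21 : c2 < 1 := by
    rw [hc2, div_lt_one (by positivity)]
    have := cos_lt_cos_of_nonneg_of_le_pi (by linarith : 0 ≤ φ - ψ) (by linarith) hlo'
    rw [cos_sub] at this
    linarith
  have hmin : min ω (arccos c2) = arccos (max c1 c2) := (antitone_arccos.map_max).symm
  rw [hmin]
  set M := max c1 c2 with hM
  have hM1 : M < 1 := max_lt hc11 hc21
  have hMc1 : c1 ≤ M := le_max_left _ _
  have hMc2 : c2 ≤ M := le_max_right _ _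
  -- corners
  have k11 : cos θ ≤ cos φ * cos φ + (M * sin φ) * sin φ := by
    linarith [mul_le_mul_of_nonneg_right hMc1 hss.le]
  have k12 : cos θ ≤ cos φ * cos ψ + (M * sin φ) * sin ψ := by
    linarith [mul_le_mul_of_nonneg_right hMc2 (mul_pos hsφ hsψ).le]
  have k22 : cos θ ≤ cos ψ * cos ψ + (M * sin ψ) * sin ψ := by
    have : sin ψ ≤ sin φ := sin_le_sin_of_le_of_le_pi_div_two (by linarith) hφ.le hψφ.le
    have h3 : sin ψ * sin ψ ≤ sin φ * sin φ := by gcongr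
    have h2 := sin_sq_add_cos_sq ψ
    have : (1 - c1) * (sin ψ * sin ψ) ≤ (1 - c1) * (sin φ * sin φ) :=
      mul_le_mul_of_nonneg_left h3 (by linarith)
    linarith [mul_le_mul_of_nonneg_right hMc1 (mul_pos hsψ hsψ).le]
  have hstrip : ∀ r s, ψ ≤ r → r ≤ φ → ψ ≤ s → s ≤ φ →
      cos θ ≤ cos r * cos s + M * (sin r * sin s) := by
    intro r s hr1 hr2 hs1 hs2
    have a1 := aux_interp (cos φ) (M * sin φ) (cos θ) ψ φ s hcθ0.le hψφ (by linarith)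
      hs1 hs2 k12 k11
    have a2 := aux_interp (cos ψ) (M * sin ψ) (cos θ) ψ φ s hcθ0.le hψφ (by linarith)
      hs1 hs2 k22 (by linarith)
    have := aux_interp (cos s) (M * sin s) (cos θ) ψ φ r hcθ0.le hψφ (by linarith)
      hr1 hr2 (by linarith) (by linarith)
    linarith
  -- stretched inequality
  have hstretch : ∀ r s q, 0 ≤ r → r ≤ φ → 0 ≤ s → s ≤ φ → q ≤ 1 →
      sin r * sin s * q + cos r * cos s ≤ cos θ →
      sin (k * r) * sin (k * s) * q + cos (k * r) * cos (k * s) ≤ c1 := by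
    intro r s q hr0 hr hs0 hs hq h
    have a0 : 0 ≤ sin r := sin_nonneg_of_nonneg_of_le_pi hr0 (by linarith)
    have b0 : 0 ≤ sin s := sin_nonneg_of_nonneg_of_le_pi hs0 (by linarith)
    have p1 : sin r * sin s ≤ (sin φ * sin (k * r)) * (sin φ * sin (k * s)) :=
      mul_le_mul (hstr r hr0 hr) (hstr s hs0 hs) b0 (a0.trans (hstr r hr0 hr))
    have p2 : 1 - cos (r - s) ≤ (sin φ * sin φ) * (1 - cos (k * r - k * s)) := by
      have hab : |r - s| ≤ φ := abs_le.2 ⟨by linarith, by linarith⟩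
      have hab0 := abs_nonneg (r - s)
      have g := hstr (|r - s| / 2) (by linarith) (by linarith)
      have g0 : 0 ≤ sin (|r - s| / 2) :=
        sin_nonneg_of_nonneg_of_le_pi (by linarith) (by linarith)
      have e1 : cos (r - s) = 1 - 2 * sin (|r - s| / 2) ^ 2 := by
        rw [← cos_abs (r - s), show cos |r - s| = cos (2 * (|r - s| / 2)) by ring_nf, cos_two_mul]
        linarith [sin_sq_add_cos_sq (|r - s| / 2)]
      have e2 : cos (k * r - k * s) = 1 - 2 * sin (k * (|r - s| / 2)) ^ 2 := by
        rw [← cos_abs, ← mul_sub, abs_mul, abs_of_pos (by linarith : 0 < k),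
          show cos (k * |r - s|) = cos (2 * (k * (|r - s| / 2))) by ring_nf, cos_two_mul]
        linarith [sin_sq_add_cos_sq (k * (|r - s| / 2))]
      rw [e1, e2]
      have : sin (|r - s| / 2) ^ 2 ≤ (sin φ * sin (k * (|r - s| / 2))) ^ 2 := by gcongr
      linarith
    have p3 := mul_le_mul_of_nonneg_right p1 (by linarith : 0 ≤ 1 - q)
    rw [cos_sub, cos_sub] at p2
    by_contra hcon
    push Not at hcon
    have := mul_lt_mul_of_pos_right hcon hss
    linarith
  -- main bound
  suffices hmain : capMax (m + 1) θ φ ≤ (sphereMax m (arccos M) + sphereMax (m + 1) ω) / 2 by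
    omega
  refine csSup_le ?_ ?_
  · exact ⟨0, ∅, ⟨by simp, by simp⟩, by simp, by simp⟩
  rintro N ⟨C, ⟨hC1, hC2⟩, hC3, rfl⟩
  have hch : ∀ x : EuclideanSpace ℝ (Fin (m + 1)), ∃ u : EuclideanSpace ℝ (Fin m),
      x ∈ C → ‖u‖ = 1 ∧ x = polarPt (aDist x (north (m + 1))) u := by
    intro x
    by_cases hx : x ∈ C
    · obtain ⟨u, hu⟩ := exists_polar hm x (hC1 x hx)
      exact ⟨u, fun _ => hu⟩
    · exact ⟨0, fun h => absurd h hx⟩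
  choose U hU using hch
  let R : EuclideanSpace ℝ (Fin (m + 1)) → ℝ := fun x => aDist x (north (m + 1))
  have hR0 : ∀ x, 0 ≤ R x := fun x => arccos_nonneg _
  have hRφ : ∀ x ∈ C, R x ≤ φ := hC3
  have hin : ∀ x ∈ C, ∀ y ∈ C, x ≠ y →
      sin (R x) * sin (R y) * inner ℝ (U x) (U y) + cos (R x) * cos (R y) ≤ cos θ := by
    intro x hx y hy hxy
    rw [← inner_polarPt, ← (hU x hx).2, ← (hU y hy).2]
    have hi : |inner ℝ x y| ≤ 1 := by
      have := abs_real_inner_le_norm x y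
      rwa [hC1 x hx, hC1 y hy, mul_one] at this
    have := cos_le_cos_of_nonneg_of_le_pi hθ.le (arccos_le_pi _) (hC2 x hx y hy hxy)
    rwa [cos_arccos (abs_le.1 hi).1 (abs_le.1 hi).2] at this
  have hq1 : ∀ x ∈ C, ∀ y ∈ C, inner ℝ (U x) (U y) ≤ 1 := by
    intro x hx y hy
    have := real_inner_le_norm (U x) (U y)
    rwa [(hU x hx).1, (hU y hy).1, mul_one] at this
  set Cin := C.filter (fun x => R x ≤ ψ) with hCin
  set Cst := C.filter (fun x => ¬ R x ≤ ψ) with hCst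
  have hcard : Cin.card + Cst.card = C.card := Finset.card_filter_add_card_filter_not _
  have hA : Cst.card ≤ sphereMax m (arccos M) := by
    apply card_le_sphereMax m M hM1 Cst U
    · intro x hx
      exact (hU x (Finset.mem_filter.1 hx).1).1
    · intro x hx y hy hxy
      obtain ⟨hx, hxψ⟩ := Finset.mem_filter.1 hx
      obtain ⟨hy, hyψ⟩ := Finset.mem_filter.1 hy
      push Not at hxψ hyψ
      have h1 := hin x hx y hy hxy
      have h2 := hstrip (R x) (R y) hxψ.le (hRφ x hx) hyψ.le (hRφ y hy)
      have a0 : 0 < sin (R x) :=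
        sin_pos_of_pos_of_lt_pi (by linarith) (by linarith [hRφ x hx])
      have b0 : 0 < sin (R y) :=
        sin_pos_of_pos_of_lt_pi (by linarith) (by linarith [hRφ y hy])
      have : (sin (R x) * sin (R y)) * inner ℝ (U x) (U y) ≤ (sin (R x) * sin (R y)) * M := by
        linarith
      exact le_of_mul_le_mul_left this (by positivity)
  have hkR : ∀ x ∈ C, 0 ≤ cos (k * R x) := by
    intro x hx
    have h1 : k * R x ≤ k * φ := mul_le_mul_of_nonneg_left (hRφ x hx) (by linarith)
    have h2 : 0 ≤ k * R x := mul_nonneg (by linarith) (hR0 x)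
    exact cos_nonneg_of_neg_pi_div_two_le_of_le (by linarith) (by linarith)
  have hT : ∀ x ∈ C, ∀ y ∈ C, x ≠ y →
      sin (k * R x) * sin (k * R y) * inner ℝ (U x) (U y) + cos (k * R x) * cos (k * R y) ≤ c1 :=
    fun x hx y hy hxy => hstretch _ _ _ (hR0 x) (hRφ x hx) (hR0 y) (hRφ y hy) (hq1 x hx y hy)
      (hin x hx y hy hxy)
  have hcross : ∀ x ∈ C, ∀ y ∈ Cin,
      sin (k * R x) * sin (k * R y) * inner ℝ (U x) (U y) - cos (k * R x) * cos (k * R y) ≤ c1 := by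
    intro x hx y hy
    obtain ⟨hy, hyψ⟩ := Finset.mem_filter.1 hy
    by_cases hxy : x = y
    · subst hxy
      rw [real_inner_self_eq_norm_sq, (hU x hx).1]
      have h1 : k * R x ≤ k * ψ := mul_le_mul_of_nonneg_left hyψ (by linarith)
      have h2 : 0 ≤ k * R x := mul_nonneg (by linarith) (hR0 x)
      have h3 := cos_le_cos_of_nonneg_of_le_pi (by linarith : 0 ≤ 2 * (k * R x))
        (by linarith : π - ω ≤ π) (by linarith)
      rw [cos_pi_sub, hcω, cos_two_mul] at h3
      linarith [sin_sq_add_cos_sq (k * R x)]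
    · have := hT x hx y hy hxy
      have := mul_nonneg (hkR x hx) (hkR y hy)
      linarith
  have hB : (C.disjSum Cin).card ≤ sphereMax (m + 1) ω := by
    apply card_le_sphereMax (m + 1) c1 hc11 (C.disjSum Cin)
      (Sum.elim (fun x => polarPt (k * R x) (U x)) (fun x => polarPt (π - k * R x) (U x)))
    · rintro (x | x) hx
      · exact norm_polarPt _ _ (hU x (Finset.inl_mem_disjSum.1 hx)).1
      · exact norm_polarPt _ _
          (hU x (Finset.mem_filter.1 (Finset.inr_mem_disjSum.1 hx)).1).1
    · rintro (x | x) hx (y | y) hy hxy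
      · simp only [Sum.elim_inl, inner_polarPt]
        exact hT x (Finset.inl_mem_disjSum.1 hx) y (Finset.inl_mem_disjSum.1 hy)
          (fun h => hxy (by rw [h]))
      · simp only [Sum.elim_inl, Sum.elim_inr, inner_polarPt, sin_pi_sub, cos_pi_sub]
        have := hcross x (Finset.inl_mem_disjSum.1 hx) y (Finset.inr_mem_disjSum.1 hy)
        linarith
      · simp only [Sum.elim_inl, Sum.elim_inr, inner_polarPt, sin_pi_sub, cos_pi_sub]
        have := hcross y (Finset.inl_mem_disjSum.1 hy) x (Finset.inr_mem_disjSum.1 hx)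
        rw [real_inner_comm] at this
        linarith
      · simp only [Sum.elim_inr, inner_polarPt, sin_pi_sub, cos_pi_sub]
        have := hT x (Finset.mem_filter.1 (Finset.inr_mem_disjSum.1 hx)).1 y
          (Finset.mem_filter.1 (Finset.inr_mem_disjSum.1 hy)).1 (fun h => hxy (by rw [h]))
        linarith
  rw [Finset.card_disjSum] at hB
  omega
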